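/- Let 𝒜 be a reduced inverse automaton over Ã, let p, q be states of 𝒜 and let w be a nonempty reduced word over Ã. Let u be the longest prefix of w labeling a path in 𝒜 starting at p and let v be the longest suffix of w labeling a path in 𝒜 ending at q. Suppose |u| + |v| ≥ |w|, so that there are (possibly empty) words x, y, z with u = xy, v = yz and w = xyz, and let p', p'', q', q'' be the states with paths p →x p' →y p'' and q' →y q'' →z q in 𝒜. Then for every reduced inverse automaton 𝓑, 𝒜 →exp^{(p,w,q)} 𝓑 if and only if 𝒜 →i^{p'=q'} 𝓑, if and only if 𝒜 →i^{p''=q''} 𝓑 (where identifying a state with itself leaves the automaton unchanged). -/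

import Mathlib

open Function

/-- A letter of the symmetrized alphabet Ã: `(a, true)` stands for `a ∈ A` and
`(a, false)` for `a⁻¹ ∈ A⁻¹`. -/
abbrev Ltr (A : Type) := A × Bool

/-- Inversion of letters of Ã. -/
def Ltr.inv {A : Type} (x : Ltr A) : Ltr A := (x.1, !x.2)

/-- The inverse `u⁻¹` of a word `u` over Ã. -/
def wordInv {A : Type} (w : List (Ltr A)) : List (Ltr A) := (w.map Ltr.inv).reverse

/-- A word over Ã is reduced iff it has no factor of the form `a a⁻¹` or `a⁻¹ a`. -/
def IsReducedWord {A : Type} (w : List (Ltr A)) : Prop :=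
  ∀ (u v : List (Ltr A)) (a : A) (b : Bool), w ≠ u ++ (a, b) :: (a, !b) :: v

/-- An automaton over the symmetrized alphabet Ã, with a bundled state type `Q`,
an initial state `q0` and a set `E` of transitions. -/
structure Autom (A : Type) : Type 1 where
  Q : Type
  q0 : Q
  E : Set (Q × Ltr A × Q)

namespace Autom

variable {A : Type}

/-- Paths using only transitions in the set `T`. -/
inductive PathOn (M : Autom A) (T : Set (M.Q × Ltr A × M.Q)) :
    M.Q → List (Ltr A) → M.Q → Prop
  | nil (q : M.Q) : PathOn M T q [] q
  | cons {p q r : M.Q} {a : Ltr A} {w : List (Ltr A)} :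
      (p, a, q) ∈ T → PathOn M T q w r → PathOn M T p (a :: w) r

/-- `M.Path p u q` : the word `u` labels a path from state `p` to state `q` in `M`. -/
def Path (M : Autom A) : M.Q → List (Ltr A) → M.Q → Prop := M.PathOn M.E

/-- The language L(𝒜) of words labeling a path from `q0` to `q0`. -/
def lang (M : Autom A) : Set (List (Ltr A)) := {w | M.Path M.q0 w M.q0}

/-- The set L(𝒜)ρ of reductions (in the free group `F(A)`) of words of L(𝒜). -/
def langRho (M : Autom A) : Set (FreeGroup A) := FreeGroup.mk '' M.lang

/-- Dual automaton: `(p,a,q)` is an edge iff `(q,a⁻¹,p)` is one. -/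
def Dual (M : Autom A) : Prop := ∀ p a q, (p, a, q) ∈ M.E ↔ (q, Ltr.inv a, p) ∈ M.E

/-- Deterministic automaton. -/
def Deterministic (M : Autom A) : Prop :=
  ∀ p a q q', (p, a, q) ∈ M.E → (p, a, q') ∈ M.E → q = q'

/-- Trim automaton: every state lies on a path from `q0` to `q0`. -/
def Trim (M : Autom A) : Prop := ∀ q, ∃ u v, M.Path M.q0 u q ∧ M.Path q v M.q0

/-- Inverse automaton: deterministic, trim and dual. -/
def IsInv (M : Autom A) : Prop := M.Deterministic ∧ M.Trim ∧ M.Dual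

/-- Reduced automaton: every state lies on a path from `q0` to `q0` labeled by
a reduced word. -/
def IsRed (M : Autom A) : Prop :=
  ∀ q, ∃ u v, IsReducedWord (u ++ v) ∧ M.Path M.q0 u q ∧ M.Path q v M.q0

/-- Homomorphisms of automata. -/
def IsHom (M N : Autom A) (φ : M.Q → N.Q) : Prop :=
  φ M.q0 = N.q0 ∧ ∀ p a q, (p, a, q) ∈ M.E → (φ p, a, φ q) ∈ N.E

/-- Isomorphism of automata. -/
def Isomorphic (M N : Autom A) : Prop :=
  ∃ φ : M.Q ≃ N.Q, M.IsHom N φ ∧ N.IsHom M φ.symm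

/-- `N` is (isomorphic to) the automaton obtained from `M` by identifying the two
states `p` and `q`. -/
def IsIdentification (M : Autom A) (p q : M.Q) (N : Autom A) : Prop :=
  ∃ φ : M.Q → N.Q,
    Surjective φ ∧ φ M.q0 = N.q0 ∧
    (∀ x y, φ x = φ y ↔ x = y ∨ (x = p ∧ y = q) ∨ (x = q ∧ y = p)) ∧
    (∀ e : N.Q × Ltr A × N.Q, e ∈ N.E ↔ ∃ e' ∈ M.E, e = (φ e'.1, e'.2.1, φ e'.2.2))

/-- `N` is (isomorphic to) the automaton obtained from `M` by deleting the state `q`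
and all transitions involving it. -/
def IsDeletion (M : Autom A) (q : M.Q) (N : Autom A) : Prop :=
  ∃ φ : N.Q → M.Q,
    Injective φ ∧ Set.range φ = {x | x ≠ q} ∧ φ N.q0 = M.q0 ∧
    (∀ e : N.Q × Ltr A × N.Q, e ∈ N.E ↔ (φ e.1, e.2.1, φ e.2.2) ∈ M.E)

/-- Elementary reduction of type 1. -/
def Red1 (M N : Autom A) : Prop :=
  ∃ p q r a, p ≠ q ∧ (r, a, p) ∈ M.E ∧ (r, a, q) ∈ M.E ∧ M.IsIdentification p q N

/-- Elementary reduction of type 2. -/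
def Red2 (M N : Autom A) : Prop :=
  ∃ (p q : M.Q) (a : Ltr A), q ≠ M.q0 ∧ (p, a, q) ∈ M.E ∧ (q, Ltr.inv a, p) ∈ M.E ∧
    (∀ e ∈ M.E, e.1 = q ∨ e.2.2 = q → e = (p, a, q) ∨ e = (q, Ltr.inv a, p)) ∧
    M.IsDeletion q N

/-- `N` is (isomorphic to) the reduction `Mρ` of `M`: perform elementary reductions
of type 1 until the automaton is deterministic, then elementary reductions of type 2
until none is possible. -/
def ReductionOf (M N : Autom A) : Prop :=
  ∃ M₁, Relation.ReflTransGen Red1 M M₁ ∧ M₁.Deterministic ∧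
    Relation.ReflTransGen Red2 M₁ N ∧ ∀ N', ¬ Red2 N N'

/-- `N` is (isomorphic to) the expansion of `M` by `(p, w, q)`: a new path labeled `w`
from `p` to `q` (together with its inverse path) whose intermediate states are new. -/
def IsExpansion (M : Autom A) (p : M.Q) (w : List (Ltr A)) (q : M.Q) (N : Autom A) : Prop :=
  w ≠ [] ∧
  ∃ (φ : M.Q → N.Q) (c : Fin (w.length + 1) → N.Q),
    Injective φ ∧ φ M.q0 = N.q0 ∧ c 0 = φ p ∧ c (Fin.last w.length) = φ q ∧
    (∀ i : Fin (w.length + 1), 0 < (i : ℕ) → (i : ℕ) < w.length → c i ∉ Set.range φ) ∧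
    (∀ i j : Fin (w.length + 1), 0 < (i : ℕ) → (i : ℕ) < w.length → c i = c j → i = j) ∧
    (∀ x : N.Q, (∃ y, φ y = x) ∨ ∃ i, c i = x) ∧
    (∀ e : N.Q × Ltr A × N.Q, e ∈ N.E ↔
      ((∃ e' ∈ M.E, e = (φ e'.1, e'.2.1, φ e'.2.2)) ∨
        ∃ i : Fin w.length,
          e = (c i.castSucc, w.get i, c i.succ) ∨
          e = (c i.succ, Ltr.inv (w.get i), c i.castSucc)))

/-- `M →exp^{(p,w,q)} N` : `N` is (isomorphic to) the reduction of the expansion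
of `M` by `(p,w,q)`. -/
def ExpStep (M : Autom A) (p : M.Q) (w : List (Ltr A)) (q : M.Q) (N : Autom A) : Prop :=
  ∃ N' N'', M.IsExpansion p w q N' ∧ ReductionOf N' N'' ∧ Isomorphic N'' N

/-- `M →re^{(p,w,q)} N` : a reduced expansion, i.e. an expansion-then-reduction in which
`M` embeds in `N`. -/
def REStep (M : Autom A) (p : M.Q) (w : List (Ltr A)) (q : M.Q) (N : Autom A) : Prop :=
  M.ExpStep p w q N ∧ ∃ ψ : M.Q → N.Q, Injective ψ ∧ M.IsHom N ψ

/-- `M →e^{w} N` : an e-step, i.e. `M →exp^{(q0,w,q0)} N`. -/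
def EStep (M : Autom A) (w : List (Ltr A)) (N : Autom A) : Prop :=
  M.ExpStep M.q0 w M.q0 N

/-- `M →i^{p=q} N` : an i-step; `N` is (isomorphic to) the reduction of the automaton
obtained from `M` by identifying the distinct states `p` and `q`. -/
def IStep (M : Autom A) (p q : M.Q) (N : Autom A) : Prop :=
  p ≠ q ∧ ∃ N' N'', M.IsIdentification p q N' ∧ ReductionOf N' N'' ∧ Isomorphic N'' N

/-- i-step, allowing `p = q` (in which case nothing happens). -/
def IStep' (M : Autom A) (p q : M.Q) (N : Autom A) : Prop :=
  (p = q ∧ M.Isomorphic N) ∨ M.IStep p q N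

/-- `M →i N` : some i-step applies. -/
def IStepAny (M N : Autom A) : Prop := ∃ p q, M.IStep p q N

/-- Some reduced expansion (by a nonempty reduced word) applies. -/
def REStepAny (M N : Autom A) : Prop :=
  ∃ p w q, IsReducedWord w ∧ M.REStep p w q N

/-- `M` is (isomorphic to) `Γ_A(H)` : a reduced inverse automaton with `L(M)ρ = H`. -/
def Represents (M : Autom A) (H : Subgroup (FreeGroup A)) : Prop :=
  M.IsInv ∧ M.IsRed ∧ M.langRho = ↑H

/-- The `q0`-diameter of an automaton: the maximum over all states `q` of the minimal
length of a reduced word labeling a path from `q0` to `q`. -/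
noncomputable def diam (M : Autom A) : ℕ :=
  ⨆ q : M.Q, sInf {n | ∃ u, IsReducedWord u ∧ u.length = n ∧ M.Path M.q0 u q}

end Autom

/-- `S` is a basis of the subgroup `H`: `S` generates `H` and freely so. -/
def IsFreeBasis {G : Type} [Group G] (S : Set G) (H : Subgroup G) : Prop :=
  Subgroup.closure S = H ∧
    Injective (FreeGroup.lift (Subtype.val : S → G) : FreeGroup S →* G)

/-- `H ≤ff K` : `H` is a free factor of `K`. -/
def FreeFactor {G : Type} [Group G] (H K : Subgroup G) : Prop :=
  ∃ B C : Set G, IsFreeBasis B H ∧ IsFreeBasis C K ∧ B ⊆ C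

/-- The rank of a subgroup: the cardinality of a basis (the common value of
the cardinalities of all bases, when `H` is a finite-rank free group). -/
noncomputable def rk {G : Type} [Group G] (H : Subgroup G) : ℕ :=
  sInf {n | ∃ S : Set G, IsFreeBasis S H ∧ S.ncard = n}

/-- `L` is a graphical free factor of `K` with respect to `A`: `Γ_A(L)` embeds
in `Γ_A(K)`. -/
def GraphicalFF {A : Type} (L K : Subgroup (FreeGroup A)) : Prop :=
  L ≤ K ∧ ∃ ML MK : Autom A, ML.Represents L ∧ MK.Represents K ∧
    ∃ ψ : ML.Q → MK.Q, Injective ψ ∧ ML.IsHom MK ψ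

/-- A step (i-step or reduced expansion) from `M` to `N` of cost `c`. -/
def StepCost {A : Type} (M N : Autom A) (c : ℕ) : Prop :=
  (c = 0 ∧ Autom.IStepAny M N) ∨
  (∃ p w q, IsReducedWord w ∧ w.length = c ∧ M.REStep p w q N)

/-- The well-order `≺` on cost sequences. -/
def costLT (k l : List ℕ) : Prop :=
  k.length < l.length ∨
  (k.length = l.length ∧ k.sum < l.sum) ∨
  (k.length = l.length ∧ k.sum = l.sum ∧ List.Lex (· < ·) k l)

namespace Autom

section Helper

variable {A : Type}

theorem ltr_inv_inv (a : Ltr A) : Ltr.inv (Ltr.inv a) = a := by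
  simp [Ltr.inv]

theorem path_append {M : Autom A} {p q r : M.Q} {u v : List (Ltr A)}
    (h1 : M.Path p u q) (h2 : M.Path q v r) : M.Path p (u ++ v) r := by
  unfold Path at *
  induction h1 with
  | nil => simpa using h2
  | cons he _ ih => exact PathOn.cons he (ih h2)

theorem path_split {M : Autom A} {v : List (Ltr A)} : ∀ {u : List (Ltr A)} {p r : M.Q},
    M.Path p (u ++ v) r → ∃ q, M.Path p u q ∧ M.Path q v r := by
  intro u
  induction u with
  | nil => intro p r h; exact ⟨p, PathOn.nil p, h⟩
  | cons a u ih =>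
    intro p r h
    cases h with
    | cons he h' =>
      obtain ⟨q, h1, h2⟩ := ih h'
      exact ⟨q, PathOn.cons he h1, h2⟩

theorem path_cons {M : Autom A} {p r : M.Q} {a : Ltr A} {u : List (Ltr A)}
    (h : M.Path p (a :: u) r) : ∃ q, (p, a, q) ∈ M.E ∧ M.Path q u r := by
  cases h with
  | cons he h' => exact ⟨_, he, h'⟩

theorem path_nil {M : Autom A} {p r : M.Q} (h : M.Path p [] r) : p = r := by
  cases h; rfl

theorem path_single {M : Autom A} {p r : M.Q} {a : Ltr A} (h : (p, a, r) ∈ M.E) :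
    M.Path p [a] r := PathOn.cons h (PathOn.nil r)

theorem path_map {M Z : Autom A} {f : M.Q → Z.Q} (hf : M.IsHom Z f) {p q : M.Q}
    {u : List (Ltr A)} (h : M.Path p u q) : Z.Path (f p) u (f q) := by
  unfold Path at *
  induction h with
  | nil => exact PathOn.nil _
  | cons he _ ih => exact PathOn.cons (hf.2 _ _ _ he) ih

theorem path_det {M : Autom A} (hM : M.Deterministic) {u : List (Ltr A)} :
    ∀ {p q q' : M.Q}, M.Path p u q → M.Path p u q' → q = q' := by
  induction u with
  | nil => intro p q q' h h'; exact (path_nil h).symm.trans (path_nil h')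
  | cons a u ih =>
    intro p q q' h h'
    obtain ⟨s, e, h⟩ := path_cons h
    obtain ⟨s', e', h'⟩ := path_cons h'
    obtain rfl := hM _ _ _ _ e e'
    exact ih h h'

theorem edge_codet {M : Autom A} (hM : M.Deterministic) (hD : M.Dual) {p p' q : M.Q} {a : Ltr A}
    (h : (p, a, q) ∈ M.E) (h' : (p', a, q) ∈ M.E) : p = p' :=
  hM _ _ _ _ ((hD _ _ _).1 h) ((hD _ _ _).1 h')

theorem path_codet {M : Autom A} (hM : M.Deterministic) (hD : M.Dual) {u : List (Ltr A)} :
    ∀ {p p' q : M.Q}, M.Path p u q → M.Path p' u q → p = p' := by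
  induction u with
  | nil => intro p q q' h h'; exact (path_nil h).trans (path_nil h').symm
  | cons a u ih =>
    intro p q q' h h'
    obtain ⟨s, e, h⟩ := path_cons h
    obtain ⟨s', e', h'⟩ := path_cons h'
    obtain rfl := ih h h'
    exact edge_codet hM hD e e'

theorem hom_comp {X Y Z : Autom A} {f : X.Q → Y.Q} {g : Y.Q → Z.Q} (hf : X.IsHom Y f)
    (hg : Y.IsHom Z g) : X.IsHom Z (g ∘ f) :=
  ⟨by simp [hf.1, hg.1], fun p a q h => hg.2 _ _ _ (hf.2 _ _ _ h)⟩

theorem iso_trans {X Y Z : Autom A} (h1 : X.Isomorphic Y) (h2 : Y.Isomorphic Z) :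
    X.Isomorphic Z := by
  obtain ⟨f, a, b⟩ := h1
  obtain ⟨g, c, d⟩ := h2
  exact ⟨f.trans g, hom_comp (f := f) (g := g) a c, hom_comp (f := g.symm) (g := f.symm) d b⟩

theorem iso_symm {X Y : Autom A} (h1 : X.Isomorphic Y) : Y.Isomorphic X := by
  obtain ⟨f, a, b⟩ := h1
  exact ⟨f.symm, b, by simpa using a⟩

theorem iso_refl (X : Autom A) : X.Isomorphic X :=
  ⟨Equiv.refl _, ⟨rfl, fun _ _ _ h => h⟩, ⟨rfl, fun _ _ _ h => h⟩⟩

/-- `Y` is, via `ψ`, the finest dual deterministic quotient of `X` identifying `p` and `q`, and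
`ψ` is injective outside of the finite set `F`. -/
structure IsFold (X : Autom A) (p q : X.Q) (Y : Autom A) (ψ : X.Q → Y.Q) (F : Finset X.Q) :
    Prop where
  surj : Surjective ψ
  hom : X.IsHom Y ψ
  edge : ∀ s a t, (s, a, t) ∈ Y.E → ∃ s' t', (s', a, t') ∈ X.E ∧ ψ s' = s ∧ ψ t' = t
  det : Y.Deterministic
  dual : Y.Dual
  eq : ψ p = ψ q
  univ : ∀ a b, ψ a = ψ b → ∀ (Z : Autom A) (f : X.Q → Z.Q), Z.Deterministic → Z.Dual →
    X.IsHom Z f → f p = f q → f a = f b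
  supp : ∀ a b, ψ a = ψ b → a ≠ b → a ∈ F

def Fold (X : Autom A) (p q : X.Q) (Y : Autom A) : Prop := ∃ ψ F, IsFold X p q Y ψ F

theorem fold_congr {X : Autom A} {p q p' q' : X.Q} {Y : Autom A}
    (h : ∀ (Z : Autom A) (f : X.Q → Z.Q), Z.Deterministic → Z.Dual → X.IsHom Z f →
      (f p = f q ↔ f p' = f q')) {ψ F} (hf : IsFold X p q Y ψ F) : IsFold X p' q' Y ψ F :=
  { hf with
    eq := (h Y ψ hf.det hf.dual hf.hom).1 hf.eq
    univ := fun a b hab Z f h1 h2 h3 h4 =>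
      hf.univ a b hab Z f h1 h2 h3 ((h Z f h1 h2 h3).2 h4) }

theorem ident_dual {X X' : Autom A} {p q : X.Q} (h : X.IsIdentification p q X') (hX : X.Dual) :
    X'.Dual := by
  obtain ⟨φ, h1, h2, h3, h4⟩ := h
  have key : ∀ s a t, (s, a, t) ∈ X'.E → (t, Ltr.inv a, s) ∈ X'.E := by
    intro s a t h
    obtain ⟨⟨s', a', t'⟩, he, heq⟩ := (h4 _).1 h
    simp only [Prod.mk.injEq] at heq
    obtain ⟨rfl, rfl, rfl⟩ := heq
    exact (h4 _).2 ⟨(t', Ltr.inv a, s'), (hX _ _ _).1 he, rfl⟩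
  intro s a t
  refine ⟨key s a t, fun h => ?_⟩
  have := key _ _ _ h
  rwa [ltr_inv_inv] at this

theorem ident_fold_forward {X X' Y : Autom A} {p q : X.Q} (h : X.IsIdentification p q X')
    (hf : Fold X' X'.q0 X'.q0 Y) : Fold X p q Y := by
  classical
  obtain ⟨φ, h1, h2, h3, h4⟩ := h
  obtain ⟨ψ, F, hf⟩ := hf
  have hφ : X.IsHom X' φ := ⟨h2, fun s a t h => (h4 _).2 ⟨_, h, rfl⟩⟩
  have hfin : (φ ⁻¹' (F : Set X'.Q)).Finite := by
    apply Set.Finite.preimage' F.finite_toSet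
    intro b _
    obtain ⟨x, rfl⟩ := h1 b
    apply Set.Finite.subset (s := {x, p, q}) (by simp)
    intro y hy
    have := (h3 y x).1 hy
    simp only [Set.mem_insert_iff, Set.mem_singleton_iff]
    tauto
  refine ⟨ψ ∘ φ, hfin.toFinset ∪ {p, q}, hf.surj.comp h1, hom_comp hφ hf.hom, ?_, hf.det, hf.dual,
    ?_, ?_, ?_⟩
  · intro s a t h
    obtain ⟨s', t', he, rfl, rfl⟩ := hf.edge _ _ _ h
    obtain ⟨⟨s1, a', t1⟩, he3, heq⟩ := (h4 _).1 he
    simp only [Prod.mk.injEq] at heq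
    obtain ⟨rfl, rfl, rfl⟩ := heq
    exact ⟨s1, t1, he3, rfl, rfl⟩
  · simp only [comp]
    rw [(h3 p q).2 (by simp)]
  · intro a b hab Z f hZ hZd hfh hpq
    have hfac : ∀ x y, φ x = φ y → f x = f y := by
      intro x y hxy
      rcases (h3 x y).1 hxy with rfl | ⟨rfl, rfl⟩ | ⟨rfl, rfl⟩
      · rfl
      · exact hpq
      · exact hpq.symm
    let g : X'.Q → Z.Q := fun y => f (surjInv h1 y)
    have hg : ∀ x, g (φ x) = f x := fun x => hfac _ _ (surjInv_eq h1 _)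
    have hgh : X'.IsHom Z g := by
      refine ⟨by rw [← h2, hg, hfh.1], ?_⟩
      intro s a t he
      obtain ⟨⟨s1, a', t1⟩, he3, heq⟩ := (h4 _).1 he
      simp only [Prod.mk.injEq] at heq
      obtain ⟨rfl, rfl, rfl⟩ := heq
      rw [hg, hg]
      exact hfh.2 _ _ _ he3
    have := hf.univ _ _ hab Z g hZ hZd hgh rfl
    rwa [hg, hg] at this
  · intro a b hab hne
    by_cases hφab : φ a = φ b
    · have := (h3 a b).1 hφab
      simp only [Finset.mem_union, Finset.mem_insert, Finset.mem_singleton]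
      tauto
    · have := hf.supp _ _ hab hφab
      simp [this]

theorem ident_fold_backward {X X' Y : Autom A} {p q : X.Q} (hpq : p ≠ q)
    (h : X.IsIdentification p q X') {ψ F} (hf : IsFold X p q Y ψ F) :
    ∃ ψ' F', IsFold X' X'.q0 X'.q0 Y ψ' F' ∧ F'.card < F.card := by
  classical
  obtain ⟨φ, h1, h2, h3, h4⟩ := h
  have hφ : X.IsHom X' φ := ⟨h2, fun s a t h => (h4 _).2 ⟨_, h, rfl⟩⟩
  have hfac : ∀ x y, φ x = φ y → ψ x = ψ y := by
    intro x y hxy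
    rcases (h3 x y).1 hxy with rfl | ⟨rfl, rfl⟩ | ⟨rfl, rfl⟩
    · rfl
    · exact hf.eq
    · exact hf.eq.symm
  let g : X'.Q → Y.Q := fun y => ψ (surjInv h1 y)
  have hg : ∀ x, g (φ x) = ψ x := fun x => hfac _ _ (surjInv_eq h1 _)
  refine ⟨g, F.image φ, ⟨?_, ⟨?_, ?_⟩, ?_, hf.det, hf.dual, rfl, ?_, ?_⟩, ?_⟩
  · intro y
    obtain ⟨x, rfl⟩ := hf.surj y
    exact ⟨φ x, hg x⟩
  · rw [← h2, hg, hf.hom.1]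
  · intro s a t he
    obtain ⟨⟨s1, a', t1⟩, he3, heq⟩ := (h4 _).1 he
    simp only [Prod.mk.injEq] at heq
    obtain ⟨rfl, rfl, rfl⟩ := heq
    rw [hg, hg]
    exact hf.hom.2 _ _ _ he3
  · intro s a t he
    obtain ⟨s', t', he2, rfl, rfl⟩ := hf.edge _ _ _ he
    exact ⟨φ s', φ t', hφ.2 _ _ _ he2, hg _, hg _⟩
  · intro a b hab Z f hZ hZd hfh _
    obtain ⟨a, rfl⟩ := h1 a
    obtain ⟨b, rfl⟩ := h1 b
    rw [hg, hg] at hab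
    exact hf.univ _ _ hab Z (f ∘ φ) hZ hZd (hom_comp hφ hfh)
      (by simp only [comp]; rw [(h3 p q).2 (by simp)])
  · intro a b hab hne
    obtain ⟨a, rfl⟩ := h1 a
    obtain ⟨b, rfl⟩ := h1 b
    rw [hg, hg] at hab
    exact Finset.mem_image_of_mem _ (hf.supp _ _ hab (fun h => hne (by rw [h])))
  · refine lt_of_le_of_ne Finset.card_image_le (fun hc => ?_)
    have hinj := Finset.card_image_iff.1 hc
    exact hpq (hinj (hf.supp _ _ hf.eq hpq) (hf.supp _ _ hf.eq.symm hpq.symm)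
      ((h3 p q).2 (by simp)))

theorem ident_exists (X : Autom A) (p q : X.Q) : ∃ X', X.IsIdentification p q X' := by
  let S : Setoid X.Q :=
    { r := fun x y => x = y ∨ ((x = p ∨ x = q) ∧ (y = p ∨ y = q))
      iseqv := ⟨fun x => Or.inl rfl, by rintro x y (rfl | h) <;> tauto,
        by rintro x y z (rfl | h) (rfl | h') <;> tauto⟩ }
  refine ⟨⟨Quotient S, Quotient.mk S X.q0,
    {e | ∃ e' ∈ X.E, e = (Quotient.mk S e'.1, e'.2.1, Quotient.mk S e'.2.2)}⟩,
    Quotient.mk S, Quotient.mk_surjective, rfl, ?_, fun e => Iff.rfl⟩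
  intro x y
  rw [Quotient.eq]
  change (x = y ∨ ((x = p ∨ x = q) ∧ (y = p ∨ y = q))) ↔ _
  constructor
  · rintro (h | ⟨rfl | rfl, rfl | rfl⟩) <;> simp_all
  · tauto

theorem fold_of_red1 {X Y : Autom A} (h : Relation.ReflTransGen Red1 X Y) (hY : Y.Deterministic) :
    X.Dual → Fold X X.q0 X.q0 Y := by
  induction h using Relation.ReflTransGen.head_induction_on with
  | refl =>
    intro hd
    exact ⟨id, ∅, surjective_id, ⟨rfl, fun _ _ _ h => h⟩, fun s a t h => ⟨s, t, h, rfl, rfl⟩,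
      hY, hd, rfl, fun a b h Z f _ _ _ _ => congrArg f h, fun a b h hne => absurd h hne⟩
  | head h _ ih =>
    intro hd
    obtain ⟨p, q, r, a, hpq, e1, e2, hid⟩ := h
    obtain ⟨ψ, F, hf⟩ := ident_fold_forward hid (ih (ident_dual hid hd))
    refine ⟨ψ, F, fold_congr ?_ hf⟩
    intro Z f hZ _ hfh
    simp only [iff_true]
    exact hZ _ _ _ _ (hfh.2 _ _ _ e1) (hfh.2 _ _ _ e2)

theorem iso_of_fold {X Y : Autom A} {p : X.Q} (hX : X.Deterministic) (hd : X.Dual) {ψ F}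
    (hf : IsFold X p p Y ψ F) : X.Isomorphic Y := by
  have hinj : Injective ψ := fun a b h =>
    hf.univ a b h X id hX hd ⟨rfl, fun _ _ _ h => h⟩ rfl
  let e := Equiv.ofBijective ψ ⟨hinj, hf.surj⟩
  have he : ∀ x, e.symm (ψ x) = x := fun x => e.symm_apply_apply x
  refine ⟨e, hf.hom, ?_, ?_⟩
  · rw [← hf.hom.1]; exact he _
  · intro s a t h
    obtain ⟨s', t', h', rfl, rfl⟩ := hf.edge _ _ _ h
    rw [he, he]
    exact h'

theorem red1_of_fold (n : ℕ) : ∀ {X Y : Autom A} {ψ F}, X.Dual →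
    IsFold X X.q0 X.q0 Y ψ F → F.card ≤ n →
    ∃ Y', Relation.ReflTransGen Red1 X Y' ∧ Y'.Deterministic ∧ Y'.Isomorphic Y := by
  induction n with
  | zero =>
    intro X Y ψ F hd hf hc
    have hX : X.Deterministic := by
      intro r a p q h1 h2
      by_contra hne
      have := hf.supp p q (hf.det _ _ _ _ (hf.hom.2 _ _ _ h1) (hf.hom.2 _ _ _ h2)) hne
      have := Finset.card_pos.2 ⟨_, this⟩
      omega
    exact ⟨X, .refl, hX, iso_of_fold hX hd hf⟩
  | succ n ih =>
    intro X Y ψ F hd hf hc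
    by_cases hX : X.Deterministic
    · exact ⟨X, .refl, hX, iso_of_fold hX hd hf⟩
    · simp only [Deterministic, not_forall] at hX
      obtain ⟨r, a, p, q, h1, h2, hne⟩ := hX
      obtain ⟨X', hid⟩ := ident_exists X p q
      have hf' : IsFold X p q Y ψ F := by
        refine fold_congr ?_ hf
        intro Z f hZ _ hfh
        simp only [true_iff]
        exact hZ _ _ _ _ (hfh.2 _ _ _ h1) (hfh.2 _ _ _ h2)
      obtain ⟨ψ', F', hf'', hlt⟩ := ident_fold_backward hne hid hf'
      obtain ⟨Y', hr, hdet, hiso⟩ := ih (ident_dual hid hd) hf'' (by omega)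
      exact ⟨Y', .head ⟨p, q, r, a, hne, h1, h2, hid⟩ hr, hdet, hiso⟩

/-- The second phase of the reduction. -/
def Post (Y N : Autom A) : Prop :=
  ∃ N'', Relation.ReflTransGen Red2 Y N'' ∧ (∀ N', ¬ Red2 N'' N') ∧ Isomorphic N'' N

theorem red2_iso {X Y N : Autom A} (hiso : Y.Isomorphic X) (h : Red2 X N) : Red2 Y N := by
  obtain ⟨f, hf, hg⟩ := hiso
  obtain ⟨p, q, a, hq, e1, e2, h3, φ, i1, i2, i3, i4⟩ := h
  refine ⟨f.symm p, f.symm q, a, ?_, hg.2 _ _ _ e1, hg.2 _ _ _ e2, ?_, f.symm ∘ φ,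
    f.symm.injective.comp i1, ?_, ?_, ?_⟩
  · intro h
    apply hq
    rw [← hf.1, ← h, f.apply_symm_apply]
  · rintro ⟨s, b, t⟩ he hst
    have := h3 _ (hf.2 _ _ _ he) (by
      rcases hst with h | h
      · left; simp only at h ⊢; rw [h, f.apply_symm_apply]
      · right; simp only at h ⊢; rw [h, f.apply_symm_apply])
    simp only [Prod.mk.injEq] at this ⊢
    simpa only [Equiv.eq_symm_apply] using this
  · rw [Set.range_comp, i2]
    ext y
    simp only [Set.mem_image, Set.mem_ofPred_eq, ne_eq]
    constructor
    · rintro ⟨z, hz, rfl⟩ h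
      exact hz (f.symm.injective h)
    · intro h
      exact ⟨f y, fun h' => h (by rw [← h', f.symm_apply_apply]), f.symm_apply_apply _⟩
  · simp only [comp]; rw [i3, hg.1]
  · intro e
    rw [i4]
    constructor
    · intro h; exact hg.2 _ _ _ h
    · intro h
      have := hf.2 _ _ _ h
      simpa using this

theorem post_iso {X Y N : Autom A} (hiso : Y.Isomorphic X) (h : Post X N) : Post Y N := by
  obtain ⟨N'', h1, h2, h3⟩ := h
  rcases Relation.ReflTransGen.cases_head h1 with rfl | ⟨c, hc, h1⟩
  · exact ⟨Y, .refl, fun N' h => h2 N' (red2_iso (iso_symm hiso) h), iso_trans hiso h3⟩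
  · exact ⟨N'', .head (red2_iso hiso hc) h1, h2, h3⟩

theorem reduction_iff {X N : Autom A} (hd : X.Dual) :
    (∃ N'', ReductionOf X N'' ∧ Isomorphic N'' N) ↔ ∃ Y, Fold X X.q0 X.q0 Y ∧ Post Y N := by
  constructor
  · rintro ⟨N'', ⟨Y, h1, h2, h3, h4⟩, h5⟩
    exact ⟨Y, fold_of_red1 h1 h2 hd, N'', h3, h4, h5⟩
  · rintro ⟨Y, ⟨ψ, F, hf⟩, hp⟩
    obtain ⟨Y', h1, h2, h3⟩ := red1_of_fold _ hd hf le_rfl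
    obtain ⟨N'', h4, h5, h6⟩ := post_iso h3 hp
    exact ⟨N'', ⟨Y', h1, h2, h4, h5⟩, h6⟩

theorem path_last {M : Autom A} {p r : M.Q} {u : List (Ltr A)} (h : M.Path p u r) (hne : p ≠ r) :
    ∃ u' a s, u = u' ++ [a] ∧ M.Path p u' s ∧ (s, a, r) ∈ M.E := by
  rcases List.eq_nil_or_concat u with rfl | ⟨u', a, rfl⟩
  · exact absurd (path_nil h) hne
  · rw [List.concat_eq_append] at h
    obtain ⟨s, h1, h2⟩ := path_split h
    obtain ⟨t, h3, h4⟩ := path_cons h2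
    obtain rfl := path_nil h4
    exact ⟨u', a, s, by simp, h1, h3⟩

theorem irred_of_red {M : Autom A} (hM : M.IsRed) (N : Autom A) : ¬ Red2 M N := by
  rintro ⟨p, q, a, hq, e1, e2, h3, -⟩
  obtain ⟨u, v, hr, hu, hv⟩ := hM q
  have hpq : p ≠ q := by
    rintro rfl
    have key : ∀ (u : List (Ltr A)) (s t : M.Q), M.Path s u t → s ≠ p → t ≠ p := by
      intro u
      induction u with
      | nil => intro s t h hs; rw [← path_nil h]; exact hs
      | cons b u ih =>
        intro s t h hs
        obtain ⟨r, he, h⟩ := path_cons h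
        refine ih r t h ?_
        rintro rfl
        rcases h3 _ he (Or.inr rfl) with h | h <;> simp only [Prod.mk.injEq] at h
        · exact hs h.1
        · exact hs h.1
    exact key u _ _ hu (Ne.symm hq) rfl
  obtain ⟨u', b, s, rfl, -, he⟩ := path_last hu (Ne.symm hq)
  cases v with
  | nil => exact hq (path_nil hv)
  | cons c v =>
    obtain ⟨t, he', -⟩ := path_cons hv
    have hb : b = a := by
      rcases h3 _ he (Or.inr rfl) with h | h <;> simp only [Prod.mk.injEq] at h
      · exact h.2.1
      · exact absurd h.2.2.symm hpq
    have hc : c = Ltr.inv a := by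
      rcases h3 _ he' (Or.inl rfl) with h | h <;> simp only [Prod.mk.injEq] at h
      · exact absurd h.1.symm hpq
      · exact h.2.1
    subst hb hc
    exact hr u' v b.1 b.2 (by simp [Ltr.inv])

theorem istep_iff {M : Autom A} (hMinv : M.IsInv) (hMred : M.IsRed) (p q : M.Q) (N : Autom A) :
    M.IStep' p q N ↔ ∃ Y, Fold M p q Y ∧ Post Y N := by
  obtain ⟨hdet, -, hdual⟩ := hMinv
  by_cases hpq : p = q
  · subst hpq
    constructor
    · rintro (⟨-, h⟩ | ⟨h, -⟩)
      · refine ⟨M, ⟨id, ∅, surjective_id, ⟨rfl, fun _ _ _ h => h⟩,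
          fun s a t h => ⟨s, t, h, rfl, rfl⟩,
          hdet, hdual, rfl, fun a b h Z f _ _ _ _ => congrArg f h,
          fun a b h hne => absurd h hne⟩, M, .refl, irred_of_red hMred, h⟩
      · exact absurd rfl h
    · rintro ⟨Y, ⟨ψ, F, hf⟩, hp⟩
      obtain ⟨N'', h1, h2, h3⟩ := post_iso (iso_of_fold hdet hdual hf) hp
      rcases Relation.ReflTransGen.cases_head h1 with rfl | ⟨c, hc, h1⟩
      · exact Or.inl ⟨rfl, h3⟩
      · exact absurd hc (irred_of_red hMred c)
  · constructor
    · rintro (⟨h, -⟩ | ⟨-, I, N'', h1, h2, h3⟩)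
      · exact absurd h hpq
      · obtain ⟨Y, h4, h5⟩ := (reduction_iff (ident_dual h1 hdual)).1 ⟨N'', h2, h3⟩
        exact ⟨Y, ident_fold_forward h1 h4, h5⟩
    · rintro ⟨Y, ⟨ψ, F, hf⟩, hp⟩
      obtain ⟨I, hI⟩ := ident_exists M p q
      obtain ⟨ψ', F', hf', -⟩ := ident_fold_backward hpq hI hf
      obtain ⟨N'', h2, h3⟩ := (reduction_iff (ident_dual hI hdual)).2 ⟨Y, ⟨ψ', F', hf'⟩, hp⟩
      exact Or.inr ⟨hpq, I, N'', hI, h2, h3⟩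

theorem exp_dual {M X : Autom A} {p q : M.Q} {w : List (Ltr A)} (hM : M.Dual)
    (h : M.IsExpansion p w q X) : X.Dual := by
  obtain ⟨-, φ, c, -, -, -, -, -, -, -, hE⟩ := h
  have key : ∀ s a t, (s, a, t) ∈ X.E → (t, Ltr.inv a, s) ∈ X.E := by
    intro s a t h
    rcases (hE _).1 h with ⟨⟨s', a', t'⟩, he, heq⟩ | ⟨i, heq | heq⟩ <;>
      simp only [Prod.mk.injEq] at heq <;> obtain ⟨rfl, rfl, rfl⟩ := heq
    · exact (hE _).2 (Or.inl ⟨(t', Ltr.inv a, s'), (hM _ _ _).1 he, rfl⟩)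
    · exact (hE _).2 (Or.inr ⟨i, Or.inr rfl⟩)
    · exact (hE _).2 (Or.inr ⟨i, Or.inl (by rw [ltr_inv_inv])⟩)
  intro s a t
  refine ⟨key s a t, fun h => ?_⟩
  have := key _ _ _ h
  rwa [ltr_inv_inv] at this

theorem exp_exists (M : Autom A) (p q : M.Q) (w : List (Ltr A)) (hw : w ≠ []) :
    ∃ X, M.IsExpansion p w q X := by
  classical
  have hpos : 0 < w.length := List.length_pos_iff.2 hw
  let Q' := M.Q ⊕ {i : Fin (w.length + 1) // 0 < (i : ℕ) ∧ (i : ℕ) < w.length}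
  let c : Fin (w.length + 1) → Q' := fun i =>
    if h : 0 < (i : ℕ) ∧ (i : ℕ) < w.length then Sum.inr ⟨i, h⟩
    else if (i : ℕ) = 0 then Sum.inl p else Sum.inl q
  refine ⟨⟨Q', Sum.inl M.q0, {e | (∃ e' ∈ M.E, e = (Sum.inl e'.1, e'.2.1, Sum.inl e'.2.2)) ∨
        ∃ i : Fin w.length,
          e = (c i.castSucc, w.get i, c i.succ) ∨
          e = (c i.succ, Ltr.inv (w.get i), c i.castSucc)}⟩, hw, Sum.inl, c,
    Sum.inl_injective, rfl, ?_, ?_, ?_, ?_, ?_, fun e => Iff.rfl⟩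
  · simp [c]
  · simp [c, hw]
  · rintro i h1 h2 ⟨m, hm⟩
    simp only [c] at hm
    rw [dif_pos ⟨h1, h2⟩] at hm
    exact absurd hm (by simp)
  · intro i j h1 h2 h
    simp only [c] at h
    rw [dif_pos ⟨h1, h2⟩] at h
    split_ifs at h
    exact congrArg Subtype.val (Sum.inr_injective h)
  · rintro (m | ⟨i, hi⟩)
    · exact Or.inl ⟨m, rfl⟩
    · exact Or.inr ⟨i, by simp only [c]; rw [dif_pos hi]⟩

/-- The relevant data of an expansion. -/
theorem path_states {Z : Autom A} : ∀ {w : List (Ltr A)} {p q : Z.Q}, Z.Path p w q →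
    ∃ z : ℕ → Z.Q, z 0 = p ∧ z w.length = q ∧
      ∀ i : Fin w.length, (z i, w.get i, z (i + 1)) ∈ Z.E := by
  intro w
  induction w with
  | nil => intro p q h; exact ⟨fun _ => p, rfl, path_nil h, fun i => i.elim0⟩
  | cons a w ih =>
    intro p q h
    obtain ⟨s, he, h⟩ := path_cons h
    obtain ⟨z, h0, h1, h2⟩ := ih h
    refine ⟨fun n => Nat.casesOn n p z, rfl, by simpa using h1, ?_⟩
    intro i
    refine Fin.cases ?_ (fun j => ?_) i
    · simpa [h0] using he
    · simpa using h2 j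

theorem fold_exp_iff {M X Y : Autom A} (hdet : M.Deterministic) (hdual : M.Dual)
    {p q : M.Q} {x y z : List (Ltr A)} {p' p'' q' q'' : M.Q}
    (hx : M.Path p x p') (hy : M.Path p' y p'')
    (hy' : M.Path q' y q'') (hz : M.Path q'' z q)
    (h : M.IsExpansion p (x ++ y ++ z) q X) :
    Fold X X.q0 X.q0 Y ↔ Fold M p' q' Y := by
  classical
  generalize hwd : x ++ y ++ z = w at h
  have hX := exp_dual hdual h
  obtain ⟨hw, φ, c, hinj, h0, hc0, hcl, hnr, hci, hcov, hE⟩ := h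
  have hφ : M.IsHom X φ := ⟨h0, fun s a t h => (hE _).2 (Or.inl ⟨_, h, rfl⟩)⟩
  have hce : ∀ i (hi : i < w.length), (c ⟨i, by omega⟩, w[i], c ⟨i + 1, by omega⟩) ∈ X.E := by
    intro i hi
    exact (hE _).2 (Or.inr ⟨⟨i, hi⟩, Or.inl rfl⟩)
  have htake : ∀ i (hi : i < w.length + 1), X.Path (φ p) (w.take i) (c ⟨i, hi⟩) := by
    intro i
    induction i with
    | zero =>
      intro hi
      simp only [List.take_zero]
      rw [← hc0]
      exact PathOn.nil _
    | succ i ih =>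
      intro hi
      rw [List.take_succ_eq_append_getElem (by omega)]
      exact path_append (ih (by omega)) (path_single (hce i (by omega)))
  have hdrop : ∀ k i (hi : i < w.length + 1), i + k = w.length →
      X.Path (c ⟨i, hi⟩) (w.drop i) (φ q) := by
    intro k
    induction k with
    | zero =>
      intro i hi hk
      have : i = w.length := by omega
      subst this
      rw [List.drop_length, ← hcl]
      exact PathOn.nil _
    | succ k ih =>
      intro i hi hk
      rw [List.drop_eq_getElem_cons (by omega)]
      exact PathOn.cons (hce i (by omega)) (ih (i + 1) (by omega) (by omega))
  have hlen : w.length = x.length + y.length + z.length := by rw [← hwd]; simp; omega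
  -- every new edge is covered by an old one
  have hedge : ∀ i (hi : i < w.length), ∃ s t, (s, w[i], t) ∈ M.E ∧
      ∀ (Z : Autom A) (f : X.Q → Z.Q), Z.Deterministic → Z.Dual → X.IsHom Z f →
        f (c ⟨i, by omega⟩) = f (φ s) ∧ f (c ⟨i + 1, by omega⟩) = f (φ t) := by
    intro i hi
    by_cases hlt : i < (x ++ y).length
    · have hp := path_append hx hy
      have h1 : x ++ y = w.take i ++ w[i] :: (x ++ y).drop (i + 1) := by
        subst hwd
        rw [List.take_append_of_le_length (by omega), List.getElem_append_left hlt,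
          ← List.drop_eq_getElem_cons, List.take_append_drop]
      rw [h1] at hp
      obtain ⟨s, hs, hp⟩ := path_split hp
      obtain ⟨t, he, -⟩ := path_cons hp
      refine ⟨s, t, he, ?_⟩
      intro Z f hZ hZd hf
      have e1 : f (c ⟨i, by omega⟩) = f (φ s) :=
        path_det hZ (path_map hf (htake i (by omega))) (path_map hf (path_map hφ hs))
      refine ⟨e1, ?_⟩
      have e2 := hf.2 _ _ _ (hce i hi)
      have e3 := hf.2 _ _ _ (hφ.2 _ _ _ he)
      rw [e1] at e2
      exact hZ _ _ _ _ e2 e3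
    · have hp := path_append hy' hz
      have hge : x.length ≤ i := by simp at hlt; omega
      have h1 : y ++ z = (y ++ z).take (i - x.length) ++ w[i] :: w.drop (i + 1) := by
        rw [← List.drop_eq_getElem_cons]
        have : w.drop i = (y ++ z).drop (i - x.length) := by
          rw [← hwd, List.append_assoc, List.drop_append, List.drop_eq_nil_of_le hge]
          rfl
        rw [this, List.take_append_drop]
      rw [h1] at hp
      obtain ⟨s, -, hp⟩ := path_split hp
      obtain ⟨t, he, ht⟩ := path_cons hp
      refine ⟨s, t, he, ?_⟩
      intro Z f hZ hZd hf
      have e1 : f (c ⟨i + 1, by omega⟩) = f (φ t) :=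
        path_codet hZ hZd (path_map hf (hdrop (w.length - (i + 1)) (i + 1) (by omega) (by omega)))
          (path_map hf (path_map hφ ht))
      refine ⟨?_, e1⟩
      have e2 := hf.2 _ _ _ (hce i hi)
      have e3 := hf.2 _ _ _ (hφ.2 _ _ _ he)
      rw [e1] at e2
      exact edge_codet hZ hZd e2 e3
  -- every state is covered by an old one
  have hstate : ∀ a : X.Q, ∃ s, ∀ (Z : Autom A) (f : X.Q → Z.Q), Z.Deterministic → Z.Dual →
      X.IsHom Z f → f a = f (φ s) := by
    intro a
    rcases hcov a with ⟨m, rfl⟩ | ⟨i, rfl⟩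
    · exact ⟨m, fun _ _ _ _ _ => rfl⟩
    · obtain ⟨i, hi⟩ := i
      by_cases hi' : i < w.length
      · obtain ⟨s, t, -, hst⟩ := hedge i hi'
        exact ⟨s, fun Z f a b c => (hst Z f a b c).1⟩
      · have : i = w.length := by omega
        subst this
        exact ⟨q, fun Z f _ _ _ => congrArg f hcl⟩
  choose ret hret using hstate
  have hpq : ∀ (Z : Autom A) (f : X.Q → Z.Q), Z.Deterministic → Z.Dual → X.IsHom Z f →
      f (φ p') = f (φ q') := by
    intro Z f hZ hZd hf
    have h1 := htake x.length (by omega)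
    have h2 := hdrop (w.length - x.length) x.length (by omega) (by omega)
    have h3 : w.take x.length = x := by rw [← hwd]; simp
    have h4 : w.drop x.length = y ++ z := by rw [← hwd]; simp
    rw [h3] at h1
    rw [h4] at h2
    exact (path_det hZ (path_map hf (path_map hφ hx)) (path_map hf h1)).trans
      (path_codet hZ hZd (path_map hf h2) (path_map hf (path_map hφ (path_append hy' hz))))
  -- extension of homomorphisms
  have hext : ∀ (Z : Autom A) (f : M.Q → Z.Q), Z.Dual → M.IsHom Z f →
      f p' = f q' → ∃ g : X.Q → Z.Q, X.IsHom Z g ∧ ∀ m, g (φ m) = f m := by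
    intro Z f hZd hf hfe
    have hp : Z.Path (f p) w (f q) := by
      rw [← hwd, List.append_assoc]
      refine path_append (path_map hf hx) ?_
      rw [hfe]
      exact path_map hf (path_append hy' hz)
    obtain ⟨zs, z0, zl, ze⟩ := path_states hp
    let g : X.Q → Z.Q := fun a =>
      if h : ∃ m, φ m = a then f h.choose
      else if h : ∃ i, c i = a then zs (h.choose : Fin (w.length + 1)) else f p
    have hg1 : ∀ m, g (φ m) = f m := by
      intro m
      have hm : ∃ m', φ m' = φ m := ⟨m, rfl⟩
      simp only [g]
      rw [dif_pos hm, hinj hm.choose_spec]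
    have hg2 : ∀ i, g (c i) = zs (i : ℕ) := by
      rintro ⟨i, hi⟩
      by_cases hi0 : i = 0
      · subst hi0
        have : c ⟨0, hi⟩ = φ p := hc0
        rw [this, hg1]; exact z0.symm
      by_cases hil : i = w.length
      · subst hil
        have : c ⟨w.length, hi⟩ = φ q := hcl
        rw [this, hg1]; exact zl.symm
      have h1 : 0 < i := by omega
      have h2 : i < w.length := by omega
      have hno : ¬ ∃ m, φ m = c ⟨i, hi⟩ := hnr ⟨i, hi⟩ h1 h2
      have hyes : ∃ j, c j = c ⟨i, hi⟩ := ⟨_, rfl⟩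
      simp only [g]
      rw [dif_neg hno, dif_pos hyes, ← hci ⟨i, hi⟩ _ h1 h2 hyes.choose_spec.symm]
    refine ⟨g, ⟨?_, ?_⟩, hg1⟩
    · rw [← h0, hg1, hf.1]
    · intro s a t h
      rcases (hE _).1 h with ⟨⟨s', a', t'⟩, he, heq⟩ | ⟨i, heq | heq⟩ <;>
        simp only [Prod.mk.injEq] at heq <;> obtain ⟨rfl, rfl, rfl⟩ := heq
      · rw [hg1, hg1]; exact hf.2 _ _ _ he
      · rw [hg2, hg2]; exact ze i
      · rw [hg2, hg2]; exact (hZd _ _ _).1 (ze i)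
  constructor
  · rintro ⟨ψ, F, hf⟩
    have hψ : M.IsHom Y (ψ ∘ φ) := hom_comp hφ hf.hom
    refine ⟨ψ ∘ φ, F.preimage φ hinj.injOn, ?_, hψ, ?_, hf.det, hf.dual,
      hpq Y ψ hf.det hf.dual hf.hom, ?_, ?_⟩
    · intro b
      obtain ⟨a, rfl⟩ := hf.surj b
      exact ⟨ret a, (hret a Y ψ hf.det hf.dual hf.hom).symm⟩
    · intro s a t he
      obtain ⟨s', t', he2, rfl, rfl⟩ := hf.edge _ _ _ he
      rcases (hE _).1 he2 with ⟨⟨s1, a', t1⟩, he3, heq⟩ | ⟨i, heq | heq⟩ <;>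
        simp only [Prod.mk.injEq] at heq <;> obtain ⟨rfl, rfl, rfl⟩ := heq
      · exact ⟨s1, t1, he3, rfl, rfl⟩
      · obtain ⟨s1, t1, he', hst⟩ := hedge i i.2
        obtain ⟨k1, k2⟩ := hst Y ψ hf.det hf.dual hf.hom
        exact ⟨s1, t1, he', k1.symm, k2.symm⟩
      · obtain ⟨s1, t1, he', hst⟩ := hedge i i.2
        obtain ⟨k1, k2⟩ := hst Y ψ hf.det hf.dual hf.hom
        exact ⟨t1, s1, (hdual _ _ _).1 he', k2.symm, k1.symm⟩
    · intro a b hab Z f hZ hZd hfh hfe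
      obtain ⟨g, hg, hg1⟩ := hext Z f hZd hfh hfe
      have := hf.univ _ _ hab Z g hZ hZd hg rfl
      rwa [hg1, hg1] at this
    · intro a b hab hne
      rw [Finset.mem_preimage]
      exact hf.supp _ _ hab (fun h => hne (hinj h))
  · rintro ⟨ψ, F, hf⟩
    obtain ⟨g, hg, hg1⟩ := hext Y ψ hf.dual hf.hom hf.eq
    have hgr : ∀ a, ψ (ret a) = g a := by
      intro a
      rw [← hg1, ← hret a Y g hf.det hf.dual hg]
    let C : Finset X.Q := Finset.univ.image c
    refine ⟨g, F.image φ ∪ C ∪ C.image (φ ∘ ret), ?_, hg, ?_, hf.det, hf.dual, rfl, ?_, ?_⟩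
    · intro b
      obtain ⟨m, rfl⟩ := hf.surj b
      exact ⟨φ m, hg1 m⟩
    · intro s a t he
      obtain ⟨s', t', he2, rfl, rfl⟩ := hf.edge _ _ _ he
      exact ⟨φ s', φ t', hφ.2 _ _ _ he2, hg1 _, hg1 _⟩
    · intro a b hab Z f hZ hZd hfh _
      rw [hret a Z f hZ hZd hfh, hret b Z f hZ hZd hfh]
      exact hf.univ (ret a) (ret b) (by rw [hgr, hgr, hab]) Z (f ∘ φ) hZ hZd (hom_comp hφ hfh)
        (hpq Z f hZ hZd hfh)
    · intro a b hab hne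
      simp only [Finset.mem_union]
      rcases hcov a with ⟨m, rfl⟩ | ⟨i, rfl⟩
      · rcases hcov b with ⟨m', rfl⟩ | ⟨i, rfl⟩
        · rw [hg1, hg1] at hab
          exact Or.inl (Or.inl (Finset.mem_image_of_mem _
            (hf.supp _ _ hab (fun h => hne (by rw [h])))))
        · by_cases hm : m = ret (c i)
          · refine Or.inr (Finset.mem_image.2 ⟨c i, ?_, by rw [hm]; rfl⟩)
            exact Finset.mem_image_of_mem _ (Finset.mem_univ _)
          · rw [hg1, ← hgr] at hab
            exact Or.inl (Or.inl (Finset.mem_image_of_mem _ (hf.supp _ _ hab hm)))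
      · exact Or.inl (Or.inr (Finset.mem_image_of_mem _ (Finset.mem_univ _)))

end Helper

end Autom

/-- Fact 2.2 (2): if `|u| + |v| ≥ |w|`, with `u = xy`, `v = yz`, `w = xyz` and
paths `p →x p' →y p''` and `q' →y q'' →z q`, then `M →exp^{(p,w,q)} N` iff
`M →i^{p'=q'} N` iff `M →i^{p''=q''} N` (identifying a state with itself leaves
the automaton unchanged). -/
theorem expstep_case_istep
    {A : Type} (M : Autom A) (hMinv : M.IsInv) (hMred : M.IsRed)
    (p q : M.Q) (w u v x y z : List (Ltr A)) (hw : w ≠ []) (hwred : IsReducedWord w)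
    (hu : u = x ++ y) (hv : v = y ++ z) (hsplit : w = x ++ y ++ z)
    (p' p'' q' q'' : M.Q)
    (hx : M.Path p x p') (hy : M.Path p' y p'')
    (hy' : M.Path q' y q'') (hz : M.Path q'' z q)
    (humax : ∀ u₁, u₁ <+: w → (∃ s, M.Path p u₁ s) → u₁.length ≤ u.length)
    (hvmax : ∀ v₁, v₁ <:+ w → (∃ s, M.Path s v₁ q) → v₁.length ≤ v.length)
    (N : Autom A) (hNinv : N.IsInv) (hNred : N.IsRed) :
    (M.ExpStep p w q N ↔ M.IStep' p' q' N) ∧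
      (M.IStep' p' q' N ↔ M.IStep' p'' q'' N) := by
  obtain ⟨hdet, htrim, hdual⟩ := hMinv
  have hMinv : M.IsInv := ⟨hdet, htrim, hdual⟩
  rw [Autom.istep_iff hMinv hMred, Autom.istep_iff hMinv hMred]
  subst hsplit
  refine ⟨⟨?_, ?_⟩, ?_⟩
  · rintro ⟨X, N'', h1, h2, h3⟩
    obtain ⟨Y, h4, h5⟩ := (Autom.reduction_iff (Autom.exp_dual hdual h1)).1 ⟨N'', h2, h3⟩
    exact ⟨Y, (Autom.fold_exp_iff hdet hdual hx hy hy' hz h1).1 h4, h5⟩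
  · rintro ⟨Y, h4, h5⟩
    obtain ⟨X, h1⟩ := Autom.exp_exists M p q _ hw
    obtain ⟨N'', h2, h3⟩ := (Autom.reduction_iff (Autom.exp_dual hdual h1)).2
      ⟨Y, (Autom.fold_exp_iff hdet hdual hx hy hy' hz h1).2 h4, h5⟩
    exact ⟨X, N'', h1, h2, h3⟩
  · have key : ∀ (Z : Autom A) (f : M.Q → Z.Q), Z.Deterministic → Z.Dual → M.IsHom Z f →
        (f p' = f q' ↔ f p'' = f q'') := by
      intro Z f hZ hZd hf
      have k1 := Autom.path_map hf hy
      have k2 := Autom.path_map hf hy'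
      constructor
      · intro h
        rw [h] at k1
        exact Autom.path_det hZ k1 k2
      · intro h
        rw [h] at k1
        exact Autom.path_codet hZ hZd k1 k2
    constructor
    · rintro ⟨Y, ⟨ψ, F, hf⟩, hp⟩
      exact ⟨Y, ⟨ψ, F, Autom.fold_congr key hf⟩, hp⟩
    · rintro ⟨Y, ⟨ψ, F, hf⟩, hp⟩
      exact ⟨Y, ⟨ψ, F, Autom.fold_congr (fun Z f a b c => (key Z f a b c).symm) hf⟩, hp⟩
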